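/- Let n, k be natural numbers and let φ₁, …, φ_k : ℝⁿ → ℝ be C^∞ functions. Define the k-form ω : ℝⁿ → AlternatingMap ℝ ℝⁿ ℝ (Fin k) by ω(z)(v₁, …, v_k) = det( (fderiv ℝ φ_i z)(v_q) )_{i,q ∈ Fin k} (that is, ω = dφ₁ ∧ ⋯ ∧ dφ_k). Then the exterior derivative of ω vanishes identically: for every z ∈ ℝⁿ and all vectors v₀, …, v_k ∈ ℝⁿ, ∑_{p=0}^{k} (−1)^p (fderiv ℝ ω z (v_p))(v₀, …, v̂_p, …, v_k) = 0, where v̂_p means v_p is omitted. -/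

import Mathlib

/-!
The form `dφ₁ ∧ ⋯ ∧ dφ_k` is the pullback of the constant form `det` on `𝕜ᵏ` under the map
`Φ = (φ₁, …, φ_k)`. Since the exterior derivative commutes with pullback and kills constant forms,
`d(dφ₁ ∧ ⋯ ∧ dφ_k) = Φ^*(d det) = 0`.
-/

open Filter Topology

section ExteriorDerivative

variable {𝕜 E F G : Type*} [NontriviallyNormedField 𝕜]
  [NormedAddCommGroup E] [NormedSpace 𝕜 E] [NormedAddCommGroup F] [NormedSpace 𝕜 F]
  [NormedAddCommGroup G] [NormedSpace 𝕜 G] {k : ℕ}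

theorem extDeriv_const (c : E [⋀^Fin k]→L[𝕜] F) (x : E) : extDeriv (fun _ ↦ c) x = 0 := by
  ext v
  simp [extDeriv_apply (differentiableAt_const c)]

theorem extDeriv_pullback_const (c : F [⋀^Fin k]→L[𝕜] G) {f : E → F} {x : E} {r : WithTop ℕ∞}
    (hf : ContDiffAt 𝕜 r f x) (hr : minSmoothness 𝕜 2 ≤ r) :
    extDeriv (fun y ↦ c.compContinuousLinearMap (fderiv 𝕜 f y)) x = 0 := by
  rw [extDeriv_pullback (ω := fun _ ↦ c) (differentiableAt_const c) hf hr, extDeriv_const]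
  rfl

theorem fderiv_toContinuousMultilinearMap_apply {ι : Type*} [Finite ι]
    {ω : E → F [⋀^ι]→L[𝕜] G} {x : E} (hω : DifferentiableAt 𝕜 ω x) (u : E) :
    fderiv 𝕜 (fun y ↦ (ω y).toContinuousMultilinearMap) x u =
      (fderiv 𝕜 ω x u).toContinuousMultilinearMap := by
  cases nonempty_fintype ι
  have hcomp := (ContinuousAlternatingMap.toContinuousMultilinearMapCLM 𝕜
    (E := F) (F := G) (ι := ι)).hasFDerivAt.comp x hω.hasFDerivAt
  exact DFunLike.congr_fun hcomp.fderiv u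

theorem extDeriv_apply_eq_sum_fderiv_toContinuousMultilinearMap
    {ω : E → E [⋀^Fin k]→L[𝕜] F} {x : E} (hω : DifferentiableAt 𝕜 ω x) (v : Fin (k + 1) → E) :
    extDeriv ω x v = ∑ p : Fin (k + 1), (-1 : 𝕜) ^ (p : ℕ) •
      fderiv 𝕜 (fun y ↦ (ω y).toContinuousMultilinearMap) x (v p) (v ∘ p.succAbove) := by
  rw [extDeriv, ContinuousAlternatingMap.alternatizeUncurryFin_apply]
  refine Finset.sum_congr rfl fun p _ ↦ ?_
  rw [fderiv_toContinuousMultilinearMap_apply hω, ← Int.cast_smul_eq_zsmul 𝕜]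
  push_cast
  rfl

end ExteriorDerivative

/-- The determinant as a continuous alternating form on `ι → R`; the arguments are the rows. -/
def detForm (R ι : Type*) [CommRing R] [TopologicalSpace R] [IsTopologicalRing R]
    [Fintype ι] [DecidableEq ι] : (ι → R) [⋀^ι]→L[R] R where
  __ := (Matrix.detRowAlternating : (ι → R) [⋀^ι]→ₗ[R] R)
  cont := Continuous.matrix_det (A := fun M : Matrix ι ι R ↦ M) continuous_id

section WedgeDifferentials

variable {𝕜 E ι : Type*} [NontriviallyNormedField 𝕜] [NormedAddCommGroup E] [NormedSpace 𝕜 E]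
  [Fintype ι] [DecidableEq ι]

/-- The differential form `dφ₁ ∧ ⋯ ∧ dφ_k`, normalized so that its value on `v₁, …, v_k` is
`det (dφ_i (v_q))`. It is defined as the pullback of the determinant under the linear map
`(dφ₁, …, dφ_k)`. -/
noncomputable def wedgeDifferentials (φ : ι → E → 𝕜) (x : E) : E [⋀^ι]→L[𝕜] 𝕜 :=
  (detForm 𝕜 ι).compContinuousLinearMap (.pi fun i ↦ fderiv 𝕜 (φ i) x)

theorem wedgeDifferentials_apply (φ : ι → E → 𝕜) (x : E) (v : ι → E) :
    wedgeDifferentials φ x v = (Matrix.of fun i q ↦ fderiv 𝕜 (φ i) x (v q)).det :=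
  Matrix.det_transpose (Matrix.of fun i q ↦ fderiv 𝕜 (φ i) x (v q))

theorem differentiableAt_wedgeDifferentials {φ : ι → E → 𝕜} {x : E}
    (hφ : ∀ i, DifferentiableAt 𝕜 (fderiv 𝕜 (φ i)) x) :
    DifferentiableAt 𝕜 (wedgeDifferentials φ) x := by
  have hdφ : DifferentiableAt 𝕜 (fun y ↦ ContinuousLinearMap.pi fun i ↦ fderiv 𝕜 (φ i) y) x :=
    (ContinuousLinearMap.piEquivL 𝕜 E fun _ : ι ↦ 𝕜).differentiableAt.comp x
      (differentiableAt_pi.2 hφ)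
  exact (differentiableAt_const _).continuousAlternatingMapCompContinuousLinearMap hdφ

theorem wedgeDifferentials_eq_pullback_detForm {φ : ι → E → 𝕜} {x : E}
    (hφ : ∀ i, DifferentiableAt 𝕜 (φ i) x) :
    wedgeDifferentials φ x =
      (detForm 𝕜 ι).compContinuousLinearMap (fderiv 𝕜 (fun y i ↦ φ i y) x) := by
  rw [fderiv_pi hφ, wedgeDifferentials]

theorem extDeriv_wedgeDifferentials {k : ℕ} {φ : Fin k → E → 𝕜} {x : E} {r : WithTop ℕ∞}
    (hφ : ∀ i, ContDiffAt 𝕜 r (φ i) x) (hr : minSmoothness 𝕜 2 ≤ r) :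
    extDeriv (wedgeDifferentials φ) x = 0 := by
  have h1r : 1 ≤ r := one_le_two.trans (le_minSmoothness.trans hr)
  have hdiff : ∀ᶠ y in 𝓝 x, ∀ i, DifferentiableAt 𝕜 (φ i) y :=
    eventually_all.2 fun i ↦ (((hφ i).of_le h1r).eventually (by simp)).mono fun y hy ↦
      hy.differentiableAt one_ne_zero
  have hpullback : wedgeDifferentials φ =ᶠ[𝓝 x] fun y ↦
      (detForm 𝕜 (Fin k)).compContinuousLinearMap (fderiv 𝕜 (fun z i ↦ φ i z) y) :=
    hdiff.mono fun _ ↦ wedgeDifferentials_eq_pullback_detForm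
  rw [hpullback.extDeriv_eq]
  exact extDeriv_pullback_const _ (contDiffAt_pi.2 hφ) hr

end WedgeDifferentials

theorem wedge_of_differentials_is_closed_general {𝕜 E : Type*} [NontriviallyNormedField 𝕜]
    [NormedAddCommGroup E] [NormedSpace 𝕜 E] {k : ℕ} {r : WithTop ℕ∞} (hr : minSmoothness 𝕜 2 ≤ r)
    {φ : Fin k → E → 𝕜} {z : E} (hφ : ∀ i, ContDiffAt 𝕜 r (φ i) z)
    {ω : E → E [×k]→L[𝕜] 𝕜}
    (hω : ∀ᶠ x in 𝓝 z, ∀ v : Fin k → E,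
      ω x v = Matrix.det (Matrix.of fun i q : Fin k ↦ fderiv 𝕜 (φ i) x (v q)))
    (v : Fin (k + 1) → E) :
    ∑ p : Fin (k + 1), (-1 : 𝕜) ^ (p : ℕ) * fderiv 𝕜 ω z (v p) (v ∘ p.succAbove) = 0 := by
  have hω_eq : ω =ᶠ[𝓝 z] fun x ↦ (wedgeDifferentials φ x).toContinuousMultilinearMap := by
    filter_upwards [hω] with x hx
    ext u
    exact (hx u).trans (wedgeDifferentials_apply φ x u).symm
  have hdiff : DifferentiableAt 𝕜 (wedgeDifferentials φ) z :=
    differentiableAt_wedgeDifferentials fun i ↦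
      ((hφ i).fderiv_right (m := 1)
        (one_add_one_eq_two.trans_le (le_minSmoothness.trans hr))).differentiableAt one_ne_zero
  simp only [hω_eq.fderiv_eq, ← smul_eq_mul]
  rw [← extDeriv_apply_eq_sum_fderiv_toContinuousMultilinearMap hdiff,
    extDeriv_wedgeDifferentials hφ hr]
  rfl

/-- **Basic Calculus Lemma (form version).**
If `φ₁, …, φ_k : ℝⁿ → ℝ` are `C^∞` and `ω = dφ₁ ∧ ⋯ ∧ dφ_k`, i.e. `ω` is the
(alternating) `k`-form with `ω z (v₁, …, v_k) = det ((fderiv ℝ (φ i) z) (v q))`,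
then the exterior derivative of `ω` vanishes identically:
`∑ p, (-1)^p • (fderiv ℝ ω z (v p)) (v₀, …, v̂_p, …, v_k) = 0`. -/
theorem wedge_of_differentials_is_closed
    (n k : ℕ)
    (φ : Fin k → (Fin n → ℝ) → ℝ) (hφ : ∀ i, ContDiff ℝ (⊤ : ℕ∞) (φ i))
    (ω : (Fin n → ℝ) → ((Fin n → ℝ) [×k]→L[ℝ] ℝ))
    (hω : ∀ (z : Fin n → ℝ) (v : Fin k → Fin n → ℝ),
      ω z v = Matrix.det (Matrix.of fun i q : Fin k => fderiv ℝ (φ i) z (v q)))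
    (z : Fin n → ℝ) (v : Fin (k + 1) → Fin n → ℝ) :
    ∑ p : Fin (k + 1), (-1 : ℝ) ^ (p : ℕ) *
      fderiv ℝ ω z (v p) (v ∘ p.succAbove) = 0 := by
  have two_le : (2 : WithTop ℕ∞) ≤ (⊤ : ℕ∞) := WithTop.coe_le_coe.2 (le_top : (2 : ℕ∞) ≤ ⊤)
  exact wedge_of_differentials_is_closed_general (by simpa using two_le)
    (fun i ↦ (hφ i).contDiffAt) (.of_forall hω) v
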